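/- Let k be a field, and let φ : A → B be an injective morphism of commutative k-Hopf algebras. Then B is faithfully flat over A. (Equivalently: a schematically dominant morphism of affine group schemes over a field is faithfully flat.) -/

import Mathlib

/-!
For a point `x : A → K` over a field extension, the orbit map `ψ : a ↦ ∑ x(a₁) ⊗ φ(a₂)` from `A` to
`R = K ⊗ B` is injective, because translation by `x` is invertible on `A`. `B` is the directed
union of the finitely generated `A`-submodules `M` with `Δ(M) ⊆ M ⊗ B`. Let `p` be a maximal ideal
of `A`, take `K = A ⧸ p` and let `n` be the dimension of the fibre `M ⧸ pM`. A dual family of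
`A`-linear maps `lᵢ : M → K` gives a `ψ`-semilinear map `θ : b ↦ (∑ lᵢ(b₁) ⊗ b₂)ᵢ` from `M` to `Rⁿ`,
whose image spans `Rⁿ` since `b ⊗ 1 = ∑ Δ(b₁) (1 ⊗ S b₂)`. By Nakayama `M` has `n` generators near
`p`; as a surjective endomorphism of `Rⁿ` is injective and so is `ψ`, these generators are free, so
`M` is flat at `p`. If `1 ∈ pM`, then `θ 1 = 0`, which is impossible since `θ` kills only elements
vanishing near `p`; so `pB ≠ B`.
-/

open TensorProduct Coalgebra

namespace HopfFlatness

section Localization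

lemma localizedModuleMap_bijective {A M N : Type*} [CommRing A] [AddCommGroup M] [Module A M]
    [AddCommGroup N] [Module A N] {S : Submonoid A} {g : N →ₗ[A] M}
    (hker : ∀ x, g x = 0 → ∃ s ∈ S, s • x = 0) (hrange : ∀ y, ∃ s ∈ S, s • y ∈ LinearMap.range g) :
    Function.Bijective (LocalizedModule.map S g) := by
  constructor
  · refine (injective_iff_map_eq_zero _).mpr fun z hz ↦ ?_
    induction z with | _ x s
    rw [LocalizedModule.map_mk, IsLocalizedModule.mk_eq_mk', IsLocalizedModule.mk'_eq_zero'] at hz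
    obtain ⟨t, ht⟩ := hz
    obtain ⟨u, hu, hux⟩ := hker (t • x) (by simpa only [Submonoid.smul_def, map_smul] using ht)
    rw [IsLocalizedModule.mk_eq_mk', IsLocalizedModule.mk'_eq_zero']
    exact ⟨⟨u, hu⟩ * t, by rw [mul_smul]; exact hux⟩
  · intro z
    induction z with | _ y s
    obtain ⟨t, ht, x, hx⟩ := hrange y
    refine ⟨.mk x (⟨t, ht⟩ * s), ?_⟩
    rw [LocalizedModule.map_mk, hx]
    exact LocalizedModule.mk_cancel_common_left ⟨t, ht⟩ s y

lemma flat_of_forall_finset_subset_flat {A B : Type*} [CommRing A] [AddCommGroup B] [Module A B]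
    (h : ∀ F : Finset B, ∃ M : Submodule A B, ↑F ⊆ (M : Set B) ∧ Module.Flat A M) :
    Module.Flat A B := by
  classical
  refine Module.Flat.of_forall_isTrivialRelation fun {l f x} hfx ↦ ?_
  obtain ⟨M, hFM, _⟩ := h (Finset.univ.image x)
  have hx (i) : x i ∈ M := hFM (by simp)
  have hM : ∑ i, f i • (⟨x i, hx i⟩ : M) = 0 := Subtype.ext (by simpa using hfx)
  obtain ⟨n, a, y, hy, ha⟩ := Module.Flat.isTrivialRelation_of_sum_smul_eq_zero hM
  exact ⟨n, a, fun j ↦ y j, fun i ↦ by simpa using congrArg M.subtype (hy i), ha⟩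

lemma exists_finset_subset_imp_mem_smul {A B : Type*} [CommRing A] [AddCommGroup B] [Module A B]
    {I : Ideal A} {b : B} (hb : b ∈ I • (⊤ : Submodule A B)) :
    ∃ F : Finset B, ∀ M : Submodule A B, ↑F ⊆ (M : Set B) → b ∈ I • M := by
  classical
  rw [← Submodule.span_univ, ← Set.range_id, Submodule.mem_ideal_smul_span_iff_exists_sum] at hb
  obtain ⟨a, ha, rfl⟩ := hb
  exact ⟨a.support, fun M hM ↦ sum_mem fun x hx ↦ Submodule.smul_mem_smul (ha x) (hM hx)⟩

end Localization

section SemilinearFrame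
variable {A R M ι : Type*} [CommRing A] [CommRing R] [AddCommGroup M] [Module A M] [Fintype ι]

lemma pow_card_smul_eq_zero_of_smul_mem_range {L : (ι → R) →ₗ[R] (ι → R)} {r : R}
    (hr : ∀ w, r • w ∈ LinearMap.range L) {v : ι → R} (hv : L v = 0) :
    r ^ Fintype.card ι • v = 0 := by
  classical
  choose q hq using fun j ↦ hr (Pi.single j 1)
  set P := LinearMap.toMatrix' L
  have hPL (w) : P.mulVec w = L w := LinearMap.toMatrix'_mulVec L w
  let Q : Matrix ι ι R := .of fun i j ↦ q j i
  have hPQ : P * Q = r • 1 := by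
    ext i j
    have h : (P.mulVec (q j)) i = (r • Pi.single j (1 : R) : ι → R) i := by rw [hPL, hq]
    simpa [Matrix.mul_apply, Matrix.mulVec, dotProduct, Q, Matrix.one_apply, Pi.single_apply]
      using h
  have hdet : P.det * Q.det = r ^ Fintype.card ι := by
    rw [← Matrix.det_mul, hPQ, Matrix.det_smul, Matrix.det_one, mul_one]
  have hPv : P.det • v = 0 := by
    rw [← Matrix.one_mulVec v, ← Matrix.smul_mulVec, ← Matrix.adjugate_mul, ← Matrix.mulVec_mulVec,
      hPL, hv, Matrix.mulVec_zero]
  rw [← hdet, mul_comm, mul_smul, hPv, smul_zero]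

lemma pow_card_smul_eq_zero_of_map_linearCombination_eq_zero {σ : A →+* R}
    (hσ : Function.Injective σ) {θ : M →ₛₗ[σ] ι → R}
    (hθ : Submodule.span R (Set.range θ) = ⊤) {m : ι → M} {f : A}
    (hf : ∀ x, f • x ∈ LinearMap.range (Fintype.linearCombination A m)) {c : ι → A}
    (hc : θ (Fintype.linearCombination A m c) = 0) : f ^ Fintype.card ι • c = 0 := by
  let L := Fintype.linearCombination R (θ ∘ m)
  have hL (c : ι → A) : θ (Fintype.linearCombination A m c) = L (σ ∘ c) := by
    simp [L, Fintype.linearCombination_apply]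
  have hrange (w : ι → R) : σ f • w ∈ LinearMap.range L := by
    have hw : w ∈ Submodule.span R (Set.range θ) := hθ ▸ Submodule.mem_top
    suffices Submodule.span R (Set.range θ) ≤ (LinearMap.range L).comap (LinearMap.lsmul R _ (σ f))
      from this hw
    rw [Submodule.span_le]
    rintro _ ⟨x, rfl⟩
    obtain ⟨a, ha⟩ := hf x
    exact ⟨σ ∘ a, by rw [← hL, ha, map_smulₛₗ, LinearMap.lsmul_apply]⟩
  have hzero := pow_card_smul_eq_zero_of_smul_mem_range hrange ((hL c).symm.trans hc)
  ext i
  exact hσ (by simpa using congrFun hzero i)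

lemma exists_notMem_smul_mem_of_top_le_sup [Module.Finite A M] {p : Ideal A} (hp : p ≠ ⊤)
    {N : Submodule A M} (hN : ⊤ ≤ N ⊔ p • (⊤ : Submodule A M)) :
    ∃ f ∉ p, ∀ x : M, f • x ∈ N := by
  obtain ⟨f, hf, hfN⟩ := Submodule.exists_sub_one_mem_and_smul_le_of_fg_of_le_sup
    Module.Finite.fg_top le_rfl hN
  refine ⟨f, fun hfp ↦ hp ((Ideal.eq_top_iff_one p).mpr ?_), fun x ↦ ?_⟩
  · simpa using p.sub_mem hfp hf
  · exact hfN (Submodule.smul_mem_pointwise_smul x f ⊤ trivial)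

section AtPrime
variable [Module.Finite A M] {p : Ideal A} [hp : p.IsPrime] {m : ι → M}
  {σ : A →+* R} {θ : M →ₛₗ[σ] ι → R}

lemma flat_localizedModule_of_semilinear
    (hm : ⊤ ≤ LinearMap.range (Fintype.linearCombination A m) ⊔ p • ⊤)
    (hσ : Function.Injective σ) (hθ : Submodule.span R (Set.range θ) = ⊤) :
    Module.Flat (Localization p.primeCompl) (LocalizedModule p.primeCompl M) := by
  obtain ⟨f, hfp, hf⟩ := exists_notMem_smul_mem_of_top_le_sup hp.ne_top hm
  have hbij : Function.Bijective
      (LocalizedModule.map p.primeCompl (Fintype.linearCombination A m)) :=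
    localizedModuleMap_bijective
      (fun c hc ↦ ⟨f ^ Fintype.card ι, pow_mem hfp _,
        pow_card_smul_eq_zero_of_map_linearCombination_eq_zero hσ hθ hf (by rw [hc, map_zero])⟩)
      fun x ↦ ⟨f, hfp, hf x⟩
  exact .of_linearEquiv (LinearEquiv.ofBijective _ hbij).symm

lemma exists_notMem_smul_eq_zero_of_semilinear
    (hm : ⊤ ≤ LinearMap.range (Fintype.linearCombination A m) ⊔ p • ⊤)
    (hσ : Function.Injective σ) (hθ : Submodule.span R (Set.range θ) = ⊤) {x : M} (hx : θ x = 0) :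
    ∃ f ∉ p, f • x = 0 := by
  obtain ⟨f, hfp, hf⟩ := exists_notMem_smul_mem_of_top_le_sup hp.ne_top hm
  obtain ⟨c, hc⟩ := hf x
  refine ⟨f ^ Fintype.card ι * f, p.primeCompl.mul_mem (pow_mem hfp _) hfp, ?_⟩
  rw [mul_smul, ← hc, ← map_smul, pow_card_smul_eq_zero_of_map_linearCombination_eq_zero hσ hθ hf
    (by rw [hc, map_smulₛₗ, hx, smul_zero]), map_zero]

end AtPrime

end SemilinearFrame

lemma exists_dual_family_of_isMaximal {A M : Type*} [CommRing A] [AddCommGroup M] [Module A M]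
    [Module.Finite A M] (p : Ideal A) [p.IsMaximal] :
    ∃ (n : ℕ) (m : Fin n → M) (l : Fin n → M →ₗ[A] A ⧸ p),
      (∀ i j, l j (m i) = if i = j then 1 else 0) ∧
      ⊤ ≤ LinearMap.range (Fintype.linearCombination A m) ⊔ p • ⊤ := by
  let := Ideal.Quotient.field p
  let q := (p • ⊤ : Submodule A M).mkQ
  have : Module.Finite (A ⧸ p) (M ⧸ (p • ⊤ : Submodule A M)) := .of_restrictScalars_finite A _ _
  let e := Module.finBasis (A ⧸ p) (M ⧸ (p • ⊤ : Submodule A M))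
  choose m hm using fun i ↦ Submodule.mkQ_surjective (p • ⊤ : Submodule A M) (e i)
  refine ⟨_, m, fun j ↦ (e.coord j).restrictScalars A ∘ₗ q, fun i j ↦ ?_, fun x _ ↦ ?_⟩
  · simp [-Submodule.mkQ_apply, q, hm, Finsupp.single_apply]
  · choose c hc using fun i ↦ Ideal.Quotient.mk_surjective (e.repr (q x) i)
    have hx : q (Fintype.linearCombination A m c) = q x := by
      rw [← e.sum_repr (q x)]
      simp [-Submodule.mkQ_apply, q, Fintype.linearCombination_apply, hm, ← hc]
    exact Submodule.mem_sup.mpr ⟨_, ⟨c, rfl⟩, _, (Submodule.Quotient.eq _).mp hx.symm,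
      add_sub_cancel _ x⟩

section RightCoideal
variable {R C : Type*} [CommSemiring R] [AddCommMonoid C] [Module R C] [Coalgebra R C]

/-- A submodule `V` of a coalgebra `C` is a right coideal if `Δ(V) ⊆ V ⊗ C`, where `V ⊗ C` is
encoded by its image in `C ⊗ C`. Right coideals are the subcomodules of the regular comodule. -/
def IsRightCoideal (V : Submodule R C) : Prop :=
  ∀ v ∈ V, comul v ∈ Submodule.map₂ (TensorProduct.mk R C C) V ⊤

lemma IsRightCoideal.sup {V W : Submodule R C} (hV : IsRightCoideal V) (hW : IsRightCoideal W) :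
    IsRightCoideal (V ⊔ W) := by
  intro x hx
  obtain ⟨v, hv, w, hw, rfl⟩ := Submodule.mem_sup.mp hx
  rw [map_add]
  exact add_mem (Submodule.map₂_le_map₂_left le_sup_left (hV v hv))
    (Submodule.map₂_le_map₂_left le_sup_right (hW w hw))

lemma comul_rid_lTensor (g : C →ₗ[R] R) (t : C ⊗[R] C) :
    comul (R := R) (TensorProduct.rid R C (g.lTensor C t)) =
      ((TensorProduct.rid R C).toLinearMap ∘ₗ g.lTensor C).lTensor C
        (TensorProduct.assoc R C C C (comul.rTensor C t)) := by
  induction t with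
  | zero => simp
  | add s t hs ht => simp only [map_add, hs, ht]
  | tmul a b =>
    simp only [LinearMap.lTensor_tmul, LinearMap.rTensor_tmul, rid_tmul, map_smul]
    induction comul (R := R) a with
    | zero => simp
    | add s t hs ht => simp only [smul_add, add_tmul, map_add, hs, ht]
    | tmul c d => simp

lemma exists_fg_isRightCoideal_mem [Module.Free R C] (c : C) :
    ∃ V : Submodule R C, V.FG ∧ IsRightCoideal V ∧ c ∈ V := by
  classical
  let e := Module.Free.chooseBasis R C
  obtain ⟨b, hb⟩ := TensorProduct.eq_repr_basis_right e (comul (R := R) c)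
  have hcoord (i) : TensorProduct.rid R C ((e.coord i).lTensor C (comul c)) = b i := by
    simp [← hb, Finsupp.sum, Finsupp.single_apply, eq_comm]
  let V := Submodule.span R (b '' b.support)
  have hmem (i) (hi : i ∈ b.support) : b i ∈ V := Submodule.subset_span ⟨i, hi, rfl⟩
  have hbV (g : C →ₗ[R] C) : g.lTensor C (comul c) ∈ Submodule.map₂ (mk R C C) V ⊤ := by
    rw [← hb, Finsupp.sum, map_sum]
    exact sum_mem fun i hi ↦ Submodule.apply_mem_map₂ _ (hmem i hi) trivial
  refine ⟨V, Submodule.fg_span (b.support.finite_toSet.image b), fun v hv ↦ ?_, ?_⟩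
  · induction hv using Submodule.span_induction with
    | mem v hv =>
      obtain ⟨i, -, rfl⟩ := hv
      rw [← hcoord i, comul_rid_lTensor, coassoc_apply, ← LinearMap.comp_apply,
        ← LinearMap.lTensor_comp]
      exact hbV _
    | zero => simp
    | add v w _ _ hv hw => rw [map_add]; exact add_mem hv hw
    | smul r v _ hv => rw [map_smul]; exact Submodule.smul_mem _ r hv
  · have hc : c = TensorProduct.rid R C (counit.lTensor C (comul c)) := by simp
    rw [hc, ← hb, Finsupp.sum, map_sum, map_sum]
    exact sum_mem fun i hi ↦ by simpa using V.smul_mem _ (hmem i hi)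

lemma exists_fg_isRightCoideal_le [Module.Free R C] {W : Submodule R C} (hW : W.FG) :
    ∃ V : Submodule R C, V.FG ∧ IsRightCoideal V ∧ W ≤ V := by
  induction W, hW using Submodule.fg_induction with
  | singleton c => simpa using exists_fg_isRightCoideal_mem c
  | sup W₁ W₂ _ _ h₁ h₂ =>
    obtain ⟨V₁, hfg₁, hV₁, hle₁⟩ := h₁
    obtain ⟨V₂, hfg₂, hV₂, hle₂⟩ := h₂
    exact ⟨V₁ ⊔ V₂, hfg₁.sup hfg₂, hV₁.sup hV₂, sup_le_sup hle₁ hle₂⟩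

end RightCoideal

section Convolution

open Algebra.TensorProduct WithConv

section OrbitMap
variable {k A B K : Type*} [CommSemiring k] [CommSemiring A] [Bialgebra k A] [CommSemiring B]
  [Algebra k B] [CommSemiring K] [Algebra k K]

/-- The map `a ↦ ∑ x(a₁) ⊗ f(a₂)`: for a homomorphism of affine groups given by `f`, this is the
comorphism of the orbit map `h ↦ x · f(h)` through the point `x`. -/
noncomputable def orbitMap (x : A →ₐ[k] K) (f : A →ₐ[k] B) : A →ₐ[k] K ⊗[k] B :=
  (map x f).comp (Bialgebra.comulAlgHom k A)

lemma toConv_orbitMap (x : A →ₐ[k] K) (f : A →ₐ[k] B) :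
    toConv (orbitMap x f) =
      toConv ((includeLeft : K →ₐ[k] K ⊗[k] B).comp x) * toConv (includeRight.comp f) := by
  rw [AlgHom.convMul_def, orbitMap, ← AlgHom.comp_assoc]
  congr 2
  ext <;> simp

end OrbitMap

section Antipode
variable {k A B K : Type*} [CommSemiring k] [CommSemiring A] [HopfAlgebra k A] [CommSemiring B]
  [Algebra k B] [CommSemiring K] [Algebra k K]

lemma toConv_mul_toConv_comp_antipode (f : A →ₐ[k] B) :
    toConv f * toConv (f.comp (HopfAlgebra.antipodeAlgHom k A)) = 1 := by
  refine ofConv_injective <| AlgHom.toLinearMap_injective <| toConv_injective ?_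
  have h := LinearMap.algHom_comp_convMul_distrib f (toConv LinearMap.id)
    (toConv (HopfAlgebra.antipode k (A := A)))
  rw [LinearMap.id_mul_antipode] at h
  rw [AlgHom.toLinearMap_convMul]
  refine (congrArg toConv h.symm).trans ?_
  ext
  simp

-- The left inverse is translation by `x⁻¹ = x ∘ S`.
lemma exists_comp_orbitMap_id (x : A →ₐ[k] K) :
    ∃ g : K ⊗[k] A →ₐ[k] K ⊗[k] A, g.comp (orbitMap x (.id k A)) = includeRight := by
  let i : K →ₐ[k] K ⊗[k] A := includeLeft
  let y := toConv ((i.comp x).comp (HopfAlgebra.antipodeAlgHom k A)) * toConv includeRight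
  refine ⟨lift i (ofConv y) fun _ _ ↦ .all .., ?_⟩
  rw [← ofConv_toConv (orbitMap x (.id k A)), toConv_orbitMap, AlgHom.comp_convMul_distrib]
  simp [i, y, ← AlgHom.comp_assoc, ← mul_assoc, toConv_mul_toConv_comp_antipode]

lemma orbitMap_injective {k A B K : Type*} [CommRing k] [CommRing A] [HopfAlgebra k A]
    [CommRing B] [Algebra k B] [CommRing K] [Algebra k K] [Module.Flat k A] [Module.Flat k K]
    [FaithfulSMul k K] (x : A →ₐ[k] K) {f : A →ₐ[k] B} (hf : Function.Injective f) :
    Function.Injective (orbitMap x f) := by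
  have hid : Function.Injective (orbitMap x (.id k A)) := by
    obtain ⟨g, hg⟩ := exists_comp_orbitMap_id x
    have hright : Function.Injective (includeRight : A →ₐ[k] K ⊗[k] A) :=
      includeRight_injective (FaithfulSMul.algebraMap_injective k K)
    rw [← hg] at hright
    exact .of_comp hright
  have hcomp : orbitMap x f = (map (.id k K) f).comp (orbitMap x (.id k A)) := by
    simp [orbitMap, ← AlgHom.comp_assoc, ← Algebra.TensorProduct.map_comp]
  rw [hcomp]
  exact (Module.Flat.lTensor_preserves_injective_linearMap (M := K) f.toLinearMap hf).comp hid

lemma lift_comul_antipode_comul (a : A) :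
    lift (Bialgebra.comulAlgHom k A) (includeRight.comp (HopfAlgebra.antipodeAlgHom k A))
      (fun _ _ ↦ .all ..) (comul (R := k) a) = a ⊗ₜ[k] (1 : A) := by
  have hcomul : Bialgebra.comulAlgHom k A = orbitMap (.id k A) (.id k A) := by simp [orbitMap]
  have hconv : toConv (Bialgebra.comulAlgHom k A) *
      toConv (includeRight.comp (HopfAlgebra.antipodeAlgHom k A)) =
      toConv (includeLeft : A →ₐ[k] A ⊗[k] A) := by
    rw [hcomul, toConv_orbitMap]
    simp [mul_assoc, toConv_mul_toConv_comp_antipode]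
  simpa [AlgHom.convMul_apply] using congrArg (fun f ↦ f a) hconv

lemma IsRightCoideal.tmul_one_mem {V : Submodule k A} (hV : IsRightCoideal V) {v : A}
    (hv : v ∈ V) :
    v ⊗ₜ[k] (1 : A) ∈
      V.map comul * (includeRight : A →ₐ[k] A ⊗[k] A).range.toSubmodule := by
  rw [← lift_comul_antipode_comul]
  suffices Submodule.map₂ (TensorProduct.mk k A A) V ⊤ ≤
      (V.map comul * (includeRight : A →ₐ[k] A ⊗[k] A).range.toSubmodule).comap
        (lift (Bialgebra.comulAlgHom k A) (includeRight.comp (HopfAlgebra.antipodeAlgHom k A))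
          fun _ _ ↦ .all ..).toLinearMap from this (hV v hv)
  refine Submodule.map₂_le.mpr fun u hu b _ ↦ ?_
  simpa using Submodule.mul_mem_mul (Submodule.mem_map_of_mem hu) (by simp)

end Antipode

end Convolution

section CoidealModule
variable {k A B : Type*} [CommSemiring k] [CommSemiring A] [Algebra k A] [CommSemiring B]
  [Algebra k B] [Algebra A B] [IsScalarTower k A B]

lemma map_mul_mem_map₂ (M : Submodule A B) (w : A ⊗[k] A) {u : B ⊗[k] B}
    (hu : u ∈ Submodule.map₂ (TensorProduct.mk k B B) (M.restrictScalars k) ⊤) :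
    Algebra.TensorProduct.map (IsScalarTower.toAlgHom k A B) (IsScalarTower.toAlgHom k A B) w * u ∈
      Submodule.map₂ (TensorProduct.mk k B B) (M.restrictScalars k) ⊤ := by
  induction w with
  | zero => simp
  | add w w' hw hw' => rw [map_add, add_mul]; exact add_mem hw hw'
  | tmul a a' =>
    suffices Submodule.map₂ (TensorProduct.mk k B B) (M.restrictScalars k) ⊤ ≤
        (Submodule.map₂ (TensorProduct.mk k B B) (M.restrictScalars k) ⊤).comap
          (LinearMap.mulLeft k (algebraMap A B a ⊗ₜ algebraMap A B a')) from this hu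
    refine Submodule.map₂_le.mpr fun m hm b _ ↦ ?_
    have hmem : (a • m) ⊗ₜ[k] (algebraMap A B a' * b) ∈
        Submodule.map₂ (TensorProduct.mk k B B) (M.restrictScalars k) ⊤ :=
      Submodule.apply_mem_map₂ (TensorProduct.mk k B B) (M.smul_mem a hm) trivial
    simpa [Algebra.smul_def] using hmem

lemma rTensor_map_mul {K : Type*} [CommSemiring K] [Algebra k K] {M : Submodule A B}
    {x : A →ₐ[k] K} {l : B →ₗ[k] K} (hl : ∀ a, ∀ m ∈ M, l (a • m) = x a * l m) (w : A ⊗[k] A)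
    {u : B ⊗[k] B} (hu : u ∈ Submodule.map₂ (TensorProduct.mk k B B) (M.restrictScalars k) ⊤) :
    l.rTensor B (Algebra.TensorProduct.map (IsScalarTower.toAlgHom k A B)
        (IsScalarTower.toAlgHom k A B) w * u) =
      Algebra.TensorProduct.map x (IsScalarTower.toAlgHom k A B) w * l.rTensor B u := by
  induction w with
  | zero => simp
  | add w w' hw hw' => simp only [map_add, add_mul, hw, hw']
  | tmul a a' =>
    suffices Submodule.map₂ (TensorProduct.mk k B B) (M.restrictScalars k) ⊤ ≤ LinearMap.eqLocus
        (l.rTensor B ∘ₗ LinearMap.mulLeft k (algebraMap A B a ⊗ₜ algebraMap A B a'))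
        (LinearMap.mulLeft k (x a ⊗ₜ algebraMap A B a') ∘ₗ l.rTensor B) from this hu
    refine Submodule.map₂_le.mpr fun m hm b _ ↦ ?_
    simp [← hl a m hm, Algebra.smul_def]

end CoidealModule

section ComulTower
variable {k A B K ι : Type*} [CommSemiring k] [CommSemiring A] [Bialgebra k A] [CommSemiring B]
  [Bialgebra k B] [Algebra A B] [IsScalarTower k A B] [CommSemiring K] [Algebra k K]

variable (k A B) in
/-- The structure map `A → B` commutes with comultiplication, so that the affine scheme of `B` maps
to that of `A` compatibly with multiplication. -/
def AlgebraMapPreservesComul : Prop :=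
  ∀ a : A, comul (algebraMap A B a) = Algebra.TensorProduct.map (IsScalarTower.toAlgHom k A B)
    (IsScalarTower.toAlgHom k A B) (comul (R := k) a)

lemma AlgebraMapPreservesComul.comul_smul (hΔ : AlgebraMapPreservesComul k A B) (a : A)
    (b : B) :
    comul (R := k) (a • b) = Algebra.TensorProduct.map (IsScalarTower.toAlgHom k A B)
      (IsScalarTower.toAlgHom k A B) (comul (R := k) a) * comul b := by
  rw [Algebra.smul_def, Bialgebra.comul_mul, hΔ]

lemma IsRightCoideal.span (hΔ : AlgebraMapPreservesComul k A B) {V : Submodule k B}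
    (hV : IsRightCoideal V) :
    IsRightCoideal ((Submodule.span A (V : Set B)).restrictScalars k) := by
  intro v (hv : v ∈ Submodule.span A (V : Set B))
  induction hv using Submodule.span_induction with
  | mem v hv =>
    have hle : V ≤ (Submodule.span A (V : Set B)).restrictScalars k :=
      fun _ h ↦ Submodule.subset_span (R := A) h
    exact Submodule.map₂_le_map₂_left hle (hV v hv)
  | zero => simp
  | add v w _ _ hv hw => rw [map_add]; exact add_mem hv hw
  | smul a v _ hv => rw [hΔ.comul_smul]; exact map_mul_mem_map₂ _ _ hv

lemma exists_fg_isRightCoideal_finset_subset [Module.Free k B]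
    (hΔ : AlgebraMapPreservesComul k A B) (F : Finset B) :
    ∃ M : Submodule A B, M.FG ∧ IsRightCoideal (M.restrictScalars k) ∧ ↑F ⊆ (M : Set B) := by
  obtain ⟨V, ⟨s, rfl⟩, hV, hFV⟩ := exists_fg_isRightCoideal_le
    (Submodule.fg_span (R := k) F.finite_toSet)
  have hfg : (Submodule.span A (Submodule.span k (s : Set B) : Set B)).FG := by
    rw [Submodule.span_span_of_tower]
    exact ⟨s, rfl⟩
  exact ⟨_, hfg, hV.span hΔ, fun b hb ↦ Submodule.subset_span (hFV (Submodule.subset_span hb))⟩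

/-- The semilinear map `m ↦ (∑ lᵢ(m₁) ⊗ m₂)ᵢ` over the orbit map of `x`, for a family of
functionals `lᵢ` that are `A`-linear on `M` when `A` acts on `K` through `x`. The `lᵢ` are defined
on all of `B`, so that they can be applied to the first tensor factor of `B ⊗ B`. -/
noncomputable def frameMap (hΔ : AlgebraMapPreservesComul k A B) {M : Submodule A B}
    (hM : IsRightCoideal (M.restrictScalars k))
    (x : A →ₐ[k] K) (l : ι → B →ₗ[k] K) (hl : ∀ i a, ∀ m ∈ M, l i (a • m) = x a * l i m) :
    M →ₛₗ[(orbitMap x (IsScalarTower.toAlgHom k A B) : A →+* K ⊗[k] B)] ι → K ⊗[k] B where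
  toFun m i := (l i).rTensor B (comul (m : B))
  map_add' m m' := by ext; simp
  map_smul' a m := by
    ext i
    simp only [Submodule.coe_smul, hΔ.comul_smul]
    rw [rTensor_map_mul (hl i) _ (hM m m.2)]
    rfl

end ComulTower

section Frame
variable {k A B K ι : Type*} [CommSemiring k] [CommSemiring A] [Bialgebra k A] [CommSemiring B]
  [HopfAlgebra k B] [Algebra A B] [IsScalarTower k A B] [CommSemiring K] [Algebra k K]

lemma span_range_frameMap [Finite ι] [DecidableEq ι]
    (hΔ : AlgebraMapPreservesComul k A B) {M : Submodule A B}
    (hM : IsRightCoideal (M.restrictScalars k))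
    {x : A →ₐ[k] K} {l : ι → B →ₗ[k] K} (hl : ∀ i a, ∀ m ∈ M, l i (a • m) = x a * l i m)
    {m : ι → M} (hm : ∀ i j, l j (m i) = if i = j then 1 else 0) :
    Submodule.span (K ⊗[k] B) (Set.range (frameMap hΔ hM x l hl)) = ⊤ := by
  set S := Submodule.span (K ⊗[k] B) (Set.range (frameMap hΔ hM x l hl))
  let θ : B ⊗[k] B →ₗ[k] ι → K ⊗[k] B := LinearMap.pi fun i ↦ (l i).rTensor B
  have hle : (M.restrictScalars k).map comul *
      (Algebra.TensorProduct.includeRight : B →ₐ[k] B ⊗[k] B).range.toSubmodule ≤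
      (S.restrictScalars k).comap θ := by
    rw [Submodule.mul_le]
    rintro _ ⟨v, hv, rfl⟩ _ ⟨b, rfl⟩
    have hθ : θ (comul v * 1 ⊗ₜ b) = ((1 : K) ⊗ₜ[k] b) • frameMap hΔ hM x l hl ⟨v, hv⟩ := by
      ext i
      change (l i).rTensor B (comul v * 1 ⊗ₜ b) = 1 ⊗ₜ b * (l i).rTensor B (comul v)
      induction comul (R := k) v with
      | zero => simp
      | add s t hs ht => simp only [add_mul, mul_add, map_add, hs, ht]
      | tmul c d => simp [mul_comm]
    change θ (comul v * 1 ⊗ₜ b) ∈ S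
    rw [hθ]
    exact S.smul_mem _ (Submodule.subset_span ⟨_, rfl⟩)
  rw [eq_top_iff, ← (Pi.basisFun (K ⊗[k] B) ι).span_eq, Submodule.span_le]
  rintro _ ⟨j, rfl⟩
  have hj : θ (m j ⊗ₜ 1) = Pi.basisFun (K ⊗[k] B) ι j := by
    ext i
    rcases eq_or_ne i j with rfl | h
    · simp [θ, hm, Algebra.TensorProduct.one_def]
    · simp [θ, hm, h, h.symm]
  exact hj ▸ hle (hM.tmul_one_mem (m j).2)

lemma exists_semilinear_frame {k A B : Type*} [Field k] [CommRing A] [Bialgebra k A]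
    [CommRing B] [HopfAlgebra k B] [Algebra A B] [IsScalarTower k A B]
    (hΔ : AlgebraMapPreservesComul k A B) {M : Submodule A B} [Module.Finite A M]
    (hM : IsRightCoideal (M.restrictScalars k)) (p : Ideal A) [p.IsMaximal] :
    ∃ (n : ℕ) (m : Fin n → M)
      (θ : M →ₛₗ[(orbitMap (Ideal.Quotient.mkₐ k p) (IsScalarTower.toAlgHom k A B) :
        A →+* (A ⧸ p) ⊗[k] B)] Fin n → (A ⧸ p) ⊗[k] B),
      ⊤ ≤ LinearMap.range (Fintype.linearCombination A m) ⊔ p • ⊤ ∧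
      Submodule.span ((A ⧸ p) ⊗[k] B) (Set.range θ) = ⊤ ∧
      ∀ b ∈ p • (⊤ : Submodule A M), comul (R := k) (b : B) = (b : B) ⊗ₜ 1 → θ b = 0 := by
  obtain ⟨n, m, l, hl, hm⟩ := exists_dual_family_of_isMaximal (M := M) p
  choose L hL using fun j ↦ ((l j).restrictScalars k).exists_extend (p := M.restrictScalars k)
  have hLl (j) (b : M) : L j b = l j b := LinearMap.congr_fun (hL j) b
  have hLx (j) (a : A) (b : B) (hb : b ∈ M) : L j (a • b) = Ideal.Quotient.mkₐ k p a * L j b := by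
    have hab : L j (a • b) = l j (a • ⟨b, hb⟩) := hLl j (a • ⟨b, hb⟩)
    rw [hab, hLl j ⟨b, hb⟩, map_smul, Algebra.smul_def]
    rfl
  have hLm (i j) : L j (m i) = if i = j then 1 else 0 := by rw [hLl, hl]
  refine ⟨n, m, frameMap hΔ hM _ L hLx, hm, span_range_frameMap hΔ hM hLx hLm,
    fun b hb hb1 ↦ funext fun j ↦ ?_⟩
  have hle : p • ⊤ ≤ LinearMap.ker (l j) := Submodule.smul_le.mpr fun a ha c _ ↦ by
    rw [LinearMap.mem_ker, map_smul, Algebra.smul_def, Ideal.Quotient.algebraMap_eq,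
      Ideal.Quotient.eq_zero_iff_mem.mpr ha, zero_mul]
  have hlb : l j b = 0 := hle hb
  change (L j).rTensor B (comul (b : B)) = 0
  rw [hb1, LinearMap.rTensor_tmul, hLl, hlb, zero_tmul]

end Frame

section FaithfullyFlat
variable {k A B : Type*} [Field k] [CommRing A] [HopfAlgebra k A] [CommRing B]
  [HopfAlgebra k B] [Algebra A B] [IsScalarTower k A B]

lemma flat_of_isRightCoideal [FaithfulSMul A B]
    (hΔ : AlgebraMapPreservesComul k A B) {M : Submodule A B} [Module.Finite A M]
    (hM : IsRightCoideal (M.restrictScalars k)) : Module.Flat A M := by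
  refine Module.flat_of_localized_maximal M fun p _ ↦ ?_
  obtain ⟨n, m, θ, hm, hθ, -⟩ := exists_semilinear_frame hΔ hM p
  have := flat_localizedModule_of_semilinear hm
    (orbitMap_injective _ (FaithfulSMul.algebraMap_injective A B)) hθ
  exact .trans A (Localization p.primeCompl) _

lemma one_notMem_smul [FaithfulSMul A B]
    (hΔ : AlgebraMapPreservesComul k A B) {M : Submodule A B} [Module.Finite A M]
    (hM : IsRightCoideal (M.restrictScalars k)) (p : Ideal A) [p.IsMaximal] :
    (1 : B) ∉ p • M := by
  intro h
  have h1 : (1 : B) ∈ M := Submodule.smul_le_right h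
  obtain ⟨n, m, θ, hm, hθ, hθ0⟩ := exists_semilinear_frame hΔ hM p
  obtain ⟨f, hfp, hf⟩ := exists_notMem_smul_eq_zero_of_semilinear hm
    (orbitMap_injective _ (FaithfulSMul.algebraMap_injective A B)) hθ
    (hθ0 ⟨1, h1⟩ ((Submodule.mem_smul_top_iff ..).mpr h) Bialgebra.comul_one)
  have hf0 : algebraMap A B f = 0 := by
    simpa [Algebra.smul_def] using congrArg M.subtype hf
  rw [FaithfulSMul.algebraMap_eq_zero_iff] at hf0
  exact hfp (hf0 ▸ p.zero_mem)

theorem AlgebraMapPreservesComul.faithfullyFlat [FaithfulSMul A B]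
    (hΔ : AlgebraMapPreservesComul k A B) : Module.FaithfullyFlat A B := by
  have : Module.Flat A B := flat_of_forall_finset_subset_flat fun F ↦ by
    obtain ⟨M, hfg, hM, hFM⟩ := exists_fg_isRightCoideal_finset_subset hΔ F
    have := Module.Finite.iff_fg.mpr hfg
    exact ⟨M, hFM, flat_of_isRightCoideal hΔ hM⟩
  refine ⟨fun p _ hp ↦ ?_⟩
  obtain ⟨F, hF⟩ := exists_finset_subset_imp_mem_smul (hp ▸ Submodule.mem_top (x := (1 : B)))
  obtain ⟨M, hfg, hM, hFM⟩ := exists_fg_isRightCoideal_finset_subset hΔ F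
  have := Module.Finite.iff_fg.mpr hfg
  exact one_notMem_smul hΔ hM p (hF M hFM)

end FaithfullyFlat

end HopfFlatness

/-- Let `k` be a field and `φ : A → B` an injective morphism of commutative
`k`-Hopf algebras.  Then `B` is faithfully flat over `A` (with the `A`-algebra structure on
`B` given by `φ`): a schematically dominant morphism of affine group schemes over a field is
faithfully flat. -/
theorem hopf_injective_faithfully_flat
    (k A B : Type*) [Field k] [CommRing A] [CommRing B]
    [HopfAlgebra k A] [HopfAlgebra k B]
    (φ : A →ₐc[k] B) (hφ : Function.Injective φ) :
    letI : Algebra A B := ((φ : A →ₐ[k] B).toRingHom).toAlgebra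
    Module.FaithfullyFlat A B := by
  let : Algebra A B := ((φ : A →ₐ[k] B).toRingHom).toAlgebra
  have : IsScalarTower k A B := .of_algebraMap_eq fun r ↦ (AlgHomClass.commutes φ r).symm
  have : FaithfulSMul A B := (faithfulSMul_iff_algebraMap_injective A B).mpr hφ
  have hΔ : HopfFlatness.AlgebraMapPreservesComul k A B := fun a ↦
    (CoalgHomClass.map_comp_comul_apply φ a).symm
  exact hΔ.faithfullyFlat
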